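/- Let F_k be the class of all Boolean functions f : {0,1}^n → {±1} whose maximum sensitivity is at most k, where 0 ≤ k ≤ n. Then the cardinality of this class satisfies |F_k| ≤ 2^{Σ_{i=0}^{2k} C(n,i)}, where C(n,i) denotes the binomial coefficient. -/

import Mathlib

open Finset

/-- Flip the `i`-th bit of `x ∈ {0,1}^n`. -/
def flipBit {n : ℕ} (x : Fin n → Bool) (i : Fin n) : Fin n → Bool :=
  Function.update x i (!x i)

/-- Sensitivity of a Boolean function `f : {0,1}^n → ℤ` (with values ±1) at input `x`. -/
def sens {n : ℕ} (f : (Fin n → Bool) → ℤ) (x : Fin n → Bool) : ℕ :=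
  (Finset.univ.filter (fun i : Fin n => f x ≠ f (flipBit x i))).card

/-- Maximum sensitivity `ms(f) = max_x s(f,x)`. -/
def maxSens {n : ℕ} (f : (Fin n → Bool) → ℤ) : ℕ :=
  Finset.univ.sup (fun x : Fin n → Bool => sens f x)

/-!
Suppose `f` and `g` differ at `x` but agree at every point closer to a centre `c`. Flipping a
coordinate in which `x` differs from `c` moves `x` towards `c`, where `f` and `g` agree again, so
the flip changes the value of `f` or of `g`. Hence `s(f, x) + s(g, x)` is at least the distance
from `x` to `c`. If both sensitivities are at most `k`, no such `x` lies outside the ball of radius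
`2k` around `c`, so a function of sensitivity at most `k` is determined by its restriction to that
ball.
-/

lemma hammingDist_update_lt {ι : Type*} [Fintype ι] [DecidableEq ι] {β : ι → Type*}
    [∀ i, DecidableEq (β i)] {x c : ∀ i, β i} {i : ι} (hi : x i ≠ c i) :
    hammingDist (Function.update x i (c i)) c < hammingDist x c := by
  have herase : ({j | Function.update x i (c i) j ≠ c j} : Finset ι) =
      ({j | x j ≠ c j} : Finset ι).erase i := by
    ext j
    rw [mem_erase, mem_filter_univ, mem_filter_univ]
    rcases eq_or_ne j i with rfl | hj
    · simp
    · simp [hj]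
  rw [hammingDist, herase]
  exact card_erase_lt_of_mem ((mem_filter_univ i).2 hi)

section HammingBall

variable {ι : Type*} [Fintype ι] [DecidableEq ι]

/-- The closed Hamming ball of radius `r` around `c` in the cube `{0,1}^ι`, as a finset so that its
points can be counted. -/
def hammingBall (c : ι → Bool) (r : ℕ) : Finset (ι → Bool) :=
  {x | hammingDist x c ≤ r}

lemma mem_hammingBall {c x : ι → Bool} {r : ℕ} : x ∈ hammingBall c r ↔ hammingDist x c ≤ r := by
  simp only [hammingBall, mem_filter_univ]

lemma card_filter_hammingDist_eq (c : ι → Bool) (d : ℕ) :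
    #{x : ι → Bool | hammingDist x c = d} = (Fintype.card ι).choose d := by
  rw [← card_univ, ← card_powersetCard]
  have hxor (s : Finset ι) (i : ι) : (c i ^^ decide (i ∈ s)) ≠ c i ↔ i ∈ s := by
    cases c i <;> simp
  refine card_bij' (fun x _ ↦ ({i | x i ≠ c i} : Finset ι)) (fun s _ i ↦ c i ^^ decide (i ∈ s))
    (fun x hx ↦ ?_) (fun s hs ↦ ?_) (fun x _ ↦ ?_) (fun s _ ↦ ?_)
  · simpa only [mem_powersetCard_univ, mem_filter_univ, hammingDist] using hx
  · simpa only [mem_filter_univ, hammingDist, hxor, filter_mem_eq_inter, univ_inter,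
      mem_powersetCard_univ] using hs
  · ext i
    cases hx : x i <;> cases hc : c i <;> simp [hx, hc]
  · ext i
    simp only [mem_filter_univ, hxor]

lemma card_hammingBall (c : ι → Bool) (r : ℕ) :
    #(hammingBall c r) = ∑ d ∈ range (r + 1), (Fintype.card ι).choose d := by
  have hdist : ∀ x ∈ hammingBall c r, hammingDist x c ∈ range (r + 1) := fun x hx ↦
    mem_range_succ_iff.2 (mem_hammingBall.1 hx)
  rw [card_eq_sum_card_fiberwise hdist]
  refine sum_congr rfl fun d hd ↦ ?_
  rw [← card_filter_hammingDist_eq c d, hammingBall, filter_filter]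
  congr 1
  exact filter_congr fun x _ ↦ and_iff_right_of_imp fun h ↦ h.trans_le (mem_range_succ_iff.1 hd)

end HammingBall

lemma ncard_le_card_pow_of_eqOn {α β : Type*} {F : Set (α → β)} {B : Finset α} {S : Finset β}
    (hS : ∀ f ∈ F, ∀ x ∈ B, f x ∈ S) (hB : ∀ f ∈ F, ∀ g ∈ F, Set.EqOn f g B → f = g) :
    F.ncard ≤ #S ^ #B := by
  classical
  have hmaps : ∀ f ∈ F, B.restrict f ∈ Fintype.piFinset fun _ : B ↦ S := fun f hf ↦
    Fintype.mem_piFinset.2 fun x ↦ hS f hf x x.2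
  have hinj : Set.InjOn B.restrict F := fun f hf g hg hfg ↦
    hB f hf g hg fun x hx ↦ congrFun hfg ⟨x, hx⟩
  calc F.ncard ≤ (Fintype.piFinset fun _ : B ↦ S : Set (B → β)).ncard :=
        Set.ncard_le_ncard_of_injOn B.restrict hmaps hinj
    _ = #S ^ #B := by
        rw [Set.ncard_coe_finset, Fintype.card_piFinset, prod_const, card_univ, Fintype.card_coe]

section Sensitivity

variable {n : ℕ} {f g : (Fin n → Bool) → ℤ} {c x : Fin n → Bool}

lemma flipBit_eq_update_of_ne {i : Fin n} (hi : x i ≠ c i) :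
    flipBit x i = Function.update x i (c i) := by
  rw [flipBit, Bool.not_eq.2 hi]

lemma hammingDist_le_sens_add_sens (hne : f x ≠ g x)
    (hflip : ∀ i, x i ≠ c i → f (flipBit x i) = g (flipBit x i)) :
    hammingDist x c ≤ sens f x + sens g x := by
  have hsub : ({i | x i ≠ c i} : Finset (Fin n)) ⊆
      ({i | f x ≠ f (flipBit x i)} : Finset (Fin n)) ∪
        ({i | g x ≠ g (flipBit x i)} : Finset (Fin n)) := by
    intro i hi
    rw [mem_filter_univ] at hi
    simp only [mem_union, mem_filter_univ]
    by_contra! hconst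
    exact hne (hconst.1.trans ((hflip i hi).trans hconst.2.symm))
  exact (card_le_card hsub).trans (card_union_le _ _)

lemma eq_of_eqOn_hammingBall {r : ℕ} (hsens : ∀ x, sens f x + sens g x ≤ r)
    (hfg : Set.EqOn f g (hammingBall c r)) : f = g := by
  funext x
  induction hd : hammingDist x c using Nat.strong_induction_on generalizing x with
  | _ d ih =>
    subst hd
    by_contra hne
    have hle : hammingDist x c ≤ sens f x + sens g x := by
      refine hammingDist_le_sens_add_sens hne fun i hi ↦ ih _ ?_ _ rfl
      rw [flipBit_eq_update_of_ne hi]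
      exact hammingDist_update_lt hi
    exact hne (hfg (mem_hammingBall.2 (hle.trans (hsens x))))

lemma sens_le_maxSens (f : (Fin n → Bool) → ℤ) (x : Fin n → Bool) : sens f x ≤ maxSens f :=
  le_sup (f := sens f) (mem_univ x)

end Sensitivity

theorem card_lowSens_le_general {n k : ℕ} (S : Finset ℤ) :
    Set.ncard {f : (Fin n → Bool) → ℤ | (∀ x, f x ∈ S) ∧ maxSens f ≤ k} ≤
      #S ^ (∑ i ∈ range (2 * k + 1), n.choose i) := by
  have hball : #(hammingBall (fun _ : Fin n ↦ false) (2 * k)) =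
      ∑ i ∈ range (2 * k + 1), n.choose i := by
    rw [card_hammingBall, Fintype.card_fin]
  rw [← hball]
  refine ncard_le_card_pow_of_eqOn (fun f hf x _ ↦ hf.1 x) fun f hf g hg ↦
    eq_of_eqOn_hammingBall fun x ↦ ?_
  calc sens f x + sens g x ≤ maxSens f + maxSens g :=
        add_le_add (sens_le_maxSens f x) (sens_le_maxSens g x)
    _ ≤ k + k := add_le_add hf.2 hg.2
    _ = 2 * k := (two_mul k).symm

/-- The class `F_k` of Boolean functions `{0,1}^n → {±1}` with `ms(f) ≤ k` has at most
`2^{Σ_{i=0}^{2k} C(n,i)}` members. -/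
theorem card_lowSens_le {n k : ℕ} (hk : k ≤ n) :
    Set.ncard {f : (Fin n → Bool) → ℤ | (∀ x, f x = 1 ∨ f x = -1) ∧ maxSens f ≤ k} ≤
      2 ^ (∑ i ∈ Finset.range (2 * k + 1), n.choose i) := by
  simpa using card_lowSens_le_general (n := n) (k := k) {1, -1}
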